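/- arXiv:1508.05840 — 2 statements merged into one kernel-verified Lean document; each statement's English description precedes it below -/
import Mathlib

section
/- Let L be a first-order language, M an L-structure, and let X ⊆ (ℕ → M) be defined by an L-formula φ with free variables indexed by ℕ, i.e., X = {s : M ⊨ φ[s]}. Then for every i ∈ ℕ that does not lie in the (finite) set of free variables actually occurring in φ, C_i X = X. Consequently the dimension set Δ(X) = {i ∈ ℕ : C_i X ≠ X} is finite; that is, the cylindric set algebra of definable subsets of ^ℕM is locally finite. -/
open FirstOrder

/-- The cylindrification `C_i X = {s ∈ ^αU : ∃ t ∈ X, t j = s j for all j ≠ i}`. -/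
def Cyl {U α : Type*} (i : α) (X : Set (α → U)) : Set (α → U) :=
  {s | ∃ t ∈ X, ∀ j, j ≠ i → t j = s j}

section

variable {U α : Type*}

/-- The dimension set `Δ(X)`: the coordinates along which cylindrification changes `X`. -/
def dimensionSet (X : Set (α → U)) : Set α :=
  {i | Cyl i X ≠ X}

theorem subset_cyl (i : α) (X : Set (α → U)) : X ⊆ Cyl i X :=
  fun s hs ↦ ⟨s, hs, fun _ _ ↦ rfl⟩

theorem cyl_eq_self_iff_dependsOn_compl {i : α} {X : Set (α → U)} :
    Cyl i X = X ↔ DependsOn (· ∈ X) ({i}ᶜ : Set α) := by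
  constructor
  · intro hX s t hst
    have mem_of_agree {u v : α → U} (huv : ∀ j ∈ ({i}ᶜ : Set α), u j = v j) (hu : u ∈ X) :
        v ∈ X :=
      hX.subset ⟨u, hu, huv⟩
    exact propext ⟨mem_of_agree hst, mem_of_agree fun j hj ↦ (hst j hj).symm⟩
  · intro hX
    refine Set.Subset.antisymm ?_ (subset_cyl i X)
    rintro s ⟨t, ht, hts⟩
    exact (hX hts).mp ht

theorem dimensionSet_subset_of_dependsOn {X : Set (α → U)} {S : Set α}
    (hX : DependsOn (· ∈ X) S) : dimensionSet X ⊆ S := by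
  intro i hi
  by_contra hiS
  have dependsOn_compl : DependsOn (· ∈ X) ({i}ᶜ : Set α) :=
    hX.mono (Set.subset_compl_singleton_iff.mpr hiS)
  exact hi (cyl_eq_self_iff_dependsOn_compl.mpr dependsOn_compl)

theorem dependsOn_realize_freeVarFinset [DecidableEq α] {L : Language} {M : Type*} [L.Structure M]
    {n : ℕ} (φ : L.BoundedFormula α n) (xs : Fin n → M) :
    DependsOn (fun s : α → M ↦ φ.Realize s xs) (φ.freeVarFinset : Set α) := by
  intro s t hst
  -- Both sides are the truth value of `φ` at the common restriction to its free variables.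
  let r : φ.freeVarFinset → M := fun a ↦ s a
  have realize_s : (φ.restrictFreeVar id).Realize r xs ↔ φ.Realize s xs :=
    Language.BoundedFormula.realize_restrictFreeVar s fun _ ↦ rfl
  have realize_t : (φ.restrictFreeVar id).Realize r xs ↔ φ.Realize t xs :=
    Language.BoundedFormula.realize_restrictFreeVar t fun a ↦ hst a a.2
  exact propext (realize_s.symm.trans realize_t)

theorem definable_set_locally_finite_general [DecidableEq α] (L : Language) (M : Type*)
    [L.Structure M] (φ : L.Formula α) :
    (∀ i : α, i ∉ φ.freeVarFinset → Cyl i {s : α → M | φ.Realize s} = {s : α → M | φ.Realize s}) ∧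
      (dimensionSet {s : α → M | φ.Realize s}).Finite := by
  have dimensionSet_subset : dimensionSet {s : α → M | φ.Realize s} ⊆ φ.freeVarFinset :=
    dimensionSet_subset_of_dependsOn (dependsOn_realize_freeVarFinset φ default)
  exact ⟨fun i hi ↦ not_not.mp fun hne ↦ hi (dimensionSet_subset hne),
    φ.freeVarFinset.finite_toSet.subset dimensionSet_subset⟩

end

/-- If `X ⊆ ^ℕM` is defined by an `L`-formula `φ` with free variables indexed by `ℕ`, then
`C_i X = X` for every `i` not among the (finitely many) free variables actually occurring
in `φ`; consequently the dimension set `Δ(X) = {i : C_i X ≠ X}` is finite, i.e. the cylindric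
set algebra of definable subsets of `^ℕM` is locally finite. -/
theorem definable_set_locally_finite (L : FirstOrder.Language) (M : Type*) [L.Structure M]
    (φ : L.Formula ℕ) :
    (∀ i : ℕ, i ∉ φ.freeVarFinset →
      Cyl i {s : ℕ → M | φ.Realize s} = {s : ℕ → M | φ.Realize s}) ∧
    {i : ℕ | Cyl i {s : ℕ → M | φ.Realize s} ≠ {s : ℕ → M | φ.Realize s}}.Finite :=
  definable_set_locally_finite_general L M φ
end

section
/- Let U be a set, α a type, k a natural number, and β = α ⊕ Fin k. For a subset X ⊆ ^βU the following are equivalent: (i) C_j X = X for every index j lying in the Fin k summand of β; (ii) there exists Y ⊆ ^αU such that X = {s ∈ ^βU : s ∘ inl ∈ Y}. That is, the α-neat reduct of the full cylindric set algebra of dimension β over U consists precisely of the cylinders over ^αU. -/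
/-!
The equation `C_j X = X` says that membership in `X` does not depend on the coordinate `j`.
If a function on a product depends only on the coordinates in `A` and only on those in `B`, then
it depends only on those in `A ∩ B`: two points agreeing on `A ∩ B` are linked through the point
that follows the first on `A` and the second off `A`. Hence finitely many coordinates can be
discarded at once, and a set that depends only on the remaining ones is a cylinder over them.
-/

section DependsOn

variable {ι γ : Type*} {π : ι → Type*} {f : (Π i, π i) → γ}

theorem dependsOn_inter {A B : Set ι} (hA : DependsOn f A) (hB : DependsOn f B) :
    DependsOn f (A ∩ B) := by
  classical
  intro x y hxy
  calc
    f x = f (A.piecewise x y) := hA fun i hi => (A.piecewise_eq_of_mem x y hi).symm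
    _ = f y := hB fun i hi => by
      by_cases hiA : i ∈ A
      · exact (A.piecewise_eq_of_mem x y hiA).trans (hxy i ⟨hiA, hi⟩)
      · exact A.piecewise_eq_of_notMem x y hiA

theorem dependsOn_compl_iff_forall_dependsOn_compl_singleton {J : Set ι} (hJ : J.Finite) :
    DependsOn f Jᶜ ↔ ∀ j ∈ J, DependsOn f {j}ᶜ := by
  refine ⟨fun h j hj => h.mono (Set.compl_subset_compl.2 (Set.singleton_subset_iff.2 hj)), ?_⟩
  induction J, hJ using Set.Finite.induction_on with
  | empty => exact fun _ => Set.compl_empty ▸ dependsOn_univ f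
  | insert _ _ ih =>
    intro h
    rw [Set.insert_eq, Set.compl_union]
    obtain ⟨hj, hs⟩ := Set.forall_mem_insert.1 h
    exact dependsOn_inter hj (ih hs)

theorem dependsOn_range_iff_factorsThrough {α : Type*} {g : α → ι} :
    DependsOn f (Set.range g) ↔ f.FactorsThrough fun x a => x (g a) := by
  simp only [DependsOn, Function.FactorsThrough, Set.forall_mem_range, funext_iff]

end DependsOn

section SetAlgebra

variable {U α β : Type*}

theorem cyl_eq_self_iff_dependsOn {i : α} {X : Set (α → U)} :
    Cyl i X = X ↔ DependsOn (· ∈ X) {i}ᶜ := by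
  constructor
  · intro h
    have mem_of_agree {s t : α → U} (hst : ∀ j ∈ ({i}ᶜ : Set α), s j = t j) (hs : s ∈ X) :
        t ∈ X := h ▸ ⟨s, hs, hst⟩
    exact fun s t hst =>
      propext ⟨mem_of_agree hst, mem_of_agree fun j hj => (hst j hj).symm⟩
  · exact fun h => Set.Subset.antisymm (fun s ⟨_, ht, hts⟩ => (h hts).mp ht)
      fun s hs => ⟨s, hs, fun _ _ => rfl⟩

theorem neat_reduct_of_full_set_algebra_general {f : α → β} (hf : (Set.range f)ᶜ.Finite)
    (X : Set (β → U)) :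
    (∀ j ∉ Set.range f, Cyl j X = X) ↔ ∃ Y : Set (α → U), X = {s | s ∘ f ∈ Y} := by
  calc
    (∀ j ∉ Set.range f, Cyl j X = X)
      ↔ ∀ j ∈ (Set.range f)ᶜ, DependsOn (· ∈ X) {j}ᶜ :=
        forall₂_congr fun _ _ => cyl_eq_self_iff_dependsOn
    _ ↔ DependsOn (· ∈ X) (Set.range f) := by
        rw [← dependsOn_compl_iff_forall_dependsOn_compl_singleton hf, compl_compl]
    _ ↔ Function.FactorsThrough (· ∈ X) fun s : β → U => s ∘ f :=
        dependsOn_range_iff_factorsThrough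
    -- Sets are `Prop`-valued functions, so a factorization of `X` is a preimage.
    _ ↔ ∃ Y : Set (α → U), X = {s | s ∘ f ∈ Y} := Function.factorsThrough_iff _

end SetAlgebra

/-- Let `β = α ⊕ Fin k`.  A subset `X ⊆ ^βU` satisfies `C_j X = X` for every index `j` in the
`Fin k` summand if and only if `X` is a cylinder over `^αU`, i.e. `X = {s : s ∘ inl ∈ Y}` for
some `Y ⊆ ^αU`.  Thus the `α`-neat reduct of the full cylindric set algebra of dimension `β`
over `U` consists exactly of the cylinders over `^αU`. -/
theorem neat_reduct_of_full_set_algebra (U α : Type*) (k : ℕ)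
    (X : Set ((α ⊕ Fin k) → U)) :
    (∀ j : Fin k, Cyl (Sum.inr j) X = X) ↔
      ∃ Y : Set (α → U), X = {s : (α ⊕ Fin k) → U | (fun a => s (Sum.inl a)) ∈ Y} := by
  have hfin : (Set.range (Sum.inl : α → α ⊕ Fin k))ᶜ.Finite :=
    Set.compl_range_inl ▸ Set.finite_range Sum.inr
  simpa [Function.comp_def] using neat_reduct_of_full_set_algebra_general hfin X
end
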